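/- arXiv:2408.03973 — 2 statements merged into one kernel-verified Lean document; each statement's English description precedes it below -/
import Mathlib

section
/- Let ψ ∈ 𝒟₁, and let A ⊆ ℕ be an infinite set with lower asymptotic ψ-density zero, i.e. liminf_{n→∞} A_ψ(n)/ψ(n) = 0. Then there exists a sequence {c_n} of positive real numbers such that Σ_{n=1}^∞ c_n diverges, the sequence {c_n/ψ'(n)} is non-increasing, and the sub-series Σ_{n=1}^∞ χ_A(n)·c_n converges. -/
open Filter

/-- The class 𝒟 of strictly increasing, differentiable, unbounded functions on (0,∞). -/
def memD (ψ : ℝ → ℝ) : Prop :=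
  StrictMonoOn ψ (Set.Ioi 0) ∧ (∀ x ∈ Set.Ioi (0:ℝ), 0 < ψ x) ∧
    (∀ x ∈ Set.Ioi (0:ℝ), DifferentiableAt ℝ ψ x) ∧ Tendsto ψ atTop atTop

/-- The class 𝒟₁ of concave functions in 𝒟. -/
def memD1 (ψ : ℝ → ℝ) : Prop := memD ψ ∧ ConcaveOn ℝ (Set.Ioi 0) ψ

/-- The class 𝒟₂ of convex functions in 𝒟 with ψ(n+1)/ψ(n) → 1. -/
def memD2 (ψ : ℝ → ℝ) : Prop :=
  memD ψ ∧ ConvexOn ℝ (Set.Ioi 0) ψ ∧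
    Tendsto (fun n : ℕ => ψ (n + 1) / ψ n) atTop (nhds 1)

/-- A_ψ(n) = ∑_{k=1}^n ψ'(k) · χ_A(k). -/
noncomputable def Apsi (ψ : ℝ → ℝ) (A : Set ℕ) (n : ℕ) : ℝ :=
  ∑ k ∈ Finset.Icc 1 n, deriv ψ (k : ℝ) * A.indicator (fun _ => (1 : ℝ)) k

/-- ∑_{k=1}^n ψ'(k). -/
noncomputable def Spsi (ψ : ℝ → ℝ) (n : ℕ) : ℝ :=
  ∑ k ∈ Finset.Icc 1 n, deriv ψ (k : ℝ)

/-!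
Let `S n = w 1 + ... + w n` for a positive weight `w` with divergent sum. Pick indices `N j` along
which `S (N j) ≥ 2ʲ` while `A` carries at most the share `2⁻ʲ` of the weight of `[1, N j]`, and let
`g = ∑ j, S (N j)⁻¹ • 1_{[1, N j]}`. By Tonelli, `∑ n, g n * w n = ∑ j, 1 = ∞`, whereas the part of
this series supported on `A` is at most `∑ j, 2⁻ʲ`, so `c = g * w` works. For `w n = ψ' n` with `ψ`
concave, `S n - ψ n` is bounded, so densities relative to `S` and to `ψ` agree.
-/

open scoped Asymptotics

section StepSum

variable {ι : Type*} {a : ι → ℝ} {N : ι → ℕ}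

/-- The superposition `∑ j, a j • 1_{[0, N j)}` of step functions on `ℕ`: the decreasing multiplier
of the construction. It is meaningful only for summable `a`, since a divergent `tsum` is `0`. -/
noncomputable def stepSum (a : ι → ℝ) (N : ι → ℕ) (n : ℕ) : ℝ :=
  ∑' j, if n < N j then a j else 0

lemma summable_ite_lt (hsum : Summable a) (n : ℕ) :
    Summable fun j => if n < N j then a j else 0 :=
  (hsum.indicator {j | n < N j}).congr fun j => by simp [Set.indicator_apply]

lemma antitone_stepSum (ha : 0 ≤ a) (hsum : Summable a) : Antitone (stepSum a N) := by
  refine fun m n hmn => (summable_ite_lt hsum n).tsum_le_tsum (fun j => ?_) (summable_ite_lt hsum m)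
  have := ha j
  split_ifs <;> first | omega | simp_all

lemma stepSum_pos (ha : ∀ j, 0 < a j) (hsum : Summable a) {n : ℕ} (hn : ∃ j, n < N j) :
    0 < stepSum a N n := by
  obtain ⟨j, hj⟩ := hn
  refine (summable_ite_lt hsum n).tsum_pos (fun i => ?_) j ?_
  · exact ite_nonneg (ha i).le le_rfl
  · simpa only [if_pos hj] using ha j

lemma summable_stepSum_mul_iff (ha : 0 ≤ a) (hsum : Summable a) {v : ℕ → ℝ} (hv : 0 ≤ v) :
    Summable (fun n => stepSum a N n * v n) ↔
      Summable (fun j => a j * ∑ n ∈ Finset.range (N j), v n) := by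
  let F : ι × ℕ → ℝ := fun p => (if p.2 < N p.1 then a p.1 else 0) * v p.2
  have F_nonneg : 0 ≤ F := fun p => mul_nonneg (ite_nonneg (ha p.1) le_rfl) (hv p.2)
  have hasSum_row (j : ι) :
      HasSum (fun n => F (j, n)) (a j * ∑ n ∈ Finset.range (N j), v n) := by
    have sum_row : ∑ n ∈ Finset.range (N j), F (j, n) = a j * ∑ n ∈ Finset.range (N j), v n := by
      rw [Finset.mul_sum]
      exact Finset.sum_congr rfl fun n hn => by simp only [F, if_pos (Finset.mem_range.1 hn)]
    rw [← sum_row]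
    refine hasSum_sum_of_ne_finset_zero fun n hn => ?_
    simp only [F, if_neg (mt Finset.mem_range.2 hn), zero_mul]
  have hasSum_column (n : ℕ) : HasSum (fun j => F (j, n)) (stepSum a N n * v n) :=
    (summable_ite_lt hsum n).hasSum.mul_right (v n)
  have by_rows : Summable F ↔ Summable (fun j => a j * ∑ n ∈ Finset.range (N j), v n) := by
    simp only [summable_prod_of_nonneg F_nonneg, (hasSum_row _).tsum_eq, and_iff_right_iff_imp]
    exact fun _ j => (hasSum_row j).summable
  have by_columns : Summable (F ∘ Prod.swap) ↔ Summable (fun n => stepSum a N n * v n) := by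
    have F_swap_nonneg : 0 ≤ F ∘ Prod.swap := fun p => F_nonneg p.swap
    simp only [summable_prod_of_nonneg F_swap_nonneg, Function.comp_apply, Prod.swap_prod_mk,
      (hasSum_column _).tsum_eq, and_iff_right_iff_imp]
    exact fun _ n => (hasSum_column n).summable
  rw [← by_rows, ← by_columns]
  exact (Equiv.prodComm ℕ ι).summable_iff

end StepSum

lemma exists_seq_lt_and_le_and_le_mul {V W : ℕ → ℝ} (hW : Tendsto W atTop atTop)
    (hVW : ∀ ε > 0, ∃ᶠ n in atTop, V n ≤ ε * W n) (K : ℕ → ℝ) {ε : ℕ → ℝ} (hε : ∀ j, 0 < ε j) :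
    ∃ N : ℕ → ℕ, ∀ j, j < N j ∧ K j ≤ W (N j) ∧ V (N j) ≤ ε j * W (N j) := by
  suffices h : ∀ j, ∃ n, j < n ∧ K j ≤ W n ∧ V n ≤ ε j * W n from ⟨_, fun j => (h j).choose_spec⟩
  intro j
  obtain ⟨n, hV, hjn, hK⟩ := ((hVW (ε j) (hε j)).and_eventually
    ((eventually_gt_atTop j).and (hW.eventually_ge_atTop (K j)))).exists
  exact ⟨n, hjn, hK, hV⟩

theorem exists_antitone_not_summable_mul_and_summable_mul {v w : ℕ → ℝ} (hv : 0 ≤ v) (hw : 0 ≤ w)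
    (hdiv : Tendsto (fun n => ∑ k ∈ Finset.range n, w k) atTop atTop)
    (hvw : ∀ ε > 0, ∃ᶠ n in atTop,
      ∑ k ∈ Finset.range n, v k ≤ ε * ∑ k ∈ Finset.range n, w k) :
    ∃ g : ℕ → ℝ, Antitone g ∧ (∀ n, 0 < g n) ∧
      ¬ Summable (fun n => g n * w n) ∧ Summable (fun n => g n * v n) := by
  obtain ⟨N, hN⟩ := exists_seq_lt_and_le_and_le_mul hdiv hvw (fun j => (2 : ℝ) ^ j)
    (ε := fun j => (1 / 2) ^ j) (fun j => by positivity)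
  choose lt_N two_pow_le sum_v_le using hN
  let a : ℕ → ℝ := fun j => (∑ k ∈ Finset.range (N j), w k)⁻¹
  have sum_w_pos (j : ℕ) : 0 < ∑ k ∈ Finset.range (N j), w k :=
    (by positivity : (0 : ℝ) < 2 ^ j).trans_le (two_pow_le j)
  have a_pos (j : ℕ) : 0 < a j := inv_pos.2 (sum_w_pos j)
  have a_nonneg : 0 ≤ a := fun j => (a_pos j).le
  have summable_a : Summable a := by
    refine .of_nonneg_of_le a_nonneg (fun j => ?_) summable_geometric_two
    rw [one_div, inv_pow]
    exact inv_anti₀ (by positivity) (two_pow_le j)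
  refine ⟨stepSum a N, antitone_stepSum a_nonneg summable_a,
    fun n => stepSum_pos a_pos summable_a ⟨n, lt_N n⟩, ?_, ?_⟩
  · rw [summable_stepSum_mul_iff a_nonneg summable_a hw]
    simp only [a, inv_mul_cancel₀ (sum_w_pos _).ne', summable_const_iff, one_ne_zero,
      not_false_eq_true]
  · rw [summable_stepSum_mul_iff a_nonneg summable_a hv]
    refine .of_nonneg_of_le (fun j => mul_nonneg (a_nonneg j) (Finset.sum_nonneg fun k _ => hv k))
      (fun j => ?_) summable_geometric_two
    exact (inv_mul_le_iff₀' (sum_w_pos j)).2 (sum_v_le j)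

section Liminf

variable {α : Type*} {l : Filter α} {u v w : α → ℝ}

lemma isBoundedUnder_le_div_of_isBigO (huv : u =O[l] v) : IsBoundedUnder (· ≤ ·) l (u / v) :=
  (Asymptotics.div_isBoundedUnder_of_isBigO huv).mono_le (.of_forall fun _ => le_abs_self _)

variable [l.NeBot]

lemma frequently_le_mul_of_liminf_div_eq_zero (hv : ∀ᶠ x in l, 0 < v x) (huv : u =O[l] v)
    (h : liminf (u / v) l = 0) : ∀ ε > 0, ∃ᶠ x in l, u x ≤ ε * v x := by
  intro ε hε
  have frequently_lt : ∃ᶠ x in l, (u / v) x < ε :=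
    frequently_lt_of_liminf_lt (isBoundedUnder_le_div_of_isBigO huv).isCoboundedUnder_ge
      (h.trans_lt hε)
  exact (frequently_lt.and_eventually hv).mono fun x ⟨hlt, hvx⟩ => ((div_lt_iff₀ hvx).1 hlt).le

lemma liminf_div_le_of_isEquivalent (hu : 0 ≤ᶠ[l] u) (hv : ∀ᶠ x in l, 0 < v x)
    (hw : ∀ᶠ x in l, 0 < w x) (hvw : v ~[l] w) (huv : u =O[l] v) :
    liminf (u / w) l ≤ liminf (u / v) l := by
  have tendsto_one : Tendsto (v / w) l (nhds 1) :=
    (Asymptotics.isEquivalent_iff_tendsto_one (hw.mono fun _ => ne_of_gt)).1 hvw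
  calc liminf (u / w) l = liminf (v / w * (u / v)) l := by
        refine liminf_congr ?_
        filter_upwards [hv] with x hvx
        simp only [Pi.div_apply, Pi.mul_apply]
        field_simp
    _ ≤ limsup (v / w) l * liminf (u / v) l := by
        refine liminf_mul_le ?_ tendsto_one.isBoundedUnder_le ?_
          (isBoundedUnder_le_div_of_isBigO huv).isCoboundedUnder_ge
        · filter_upwards [hv, hw] with x hvx hwx using (div_pos hvx hwx).le
        · filter_upwards [hu, hv] with x hux hvx using div_nonneg hux hvx.le
    _ = liminf (u / v) l := by rw [tendsto_one.limsup_eq, one_mul]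

lemma liminf_div_eq_of_isEquivalent (hu : 0 ≤ᶠ[l] u) (hv : ∀ᶠ x in l, 0 < v x)
    (hw : ∀ᶠ x in l, 0 < w x) (hvw : v ~[l] w) (huv : u =O[l] v) :
    liminf (u / v) l = liminf (u / w) l :=
  le_antisymm (liminf_div_le_of_isEquivalent hu hw hv hvw.symm (huv.trans hvw.isBigO))
    (liminf_div_le_of_isEquivalent hu hv hw hvw huv)

end Liminf

lemma sum_range_add_one_eq_sum_Icc_one {M : Type*} [AddCommMonoid M] (f : ℕ → M) (n : ℕ) :
    ∑ k ∈ Finset.range n, f (k + 1) = ∑ k ∈ Finset.Icc 1 n, f k := by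
  rw [Finset.range_eq_Ico, Finset.sum_Ico_add', zero_add]
  rfl

section WeightedSums

variable {w : ℕ → ℝ}

lemma sum_mul_indicator_one_nonneg (hw : ∀ k, 1 ≤ k → 0 ≤ w k) (A : Set ℕ) (n : ℕ) :
    0 ≤ ∑ k ∈ Finset.Icc 1 n, w k * A.indicator (fun _ => (1 : ℝ)) k :=
  Finset.sum_nonneg fun k hk => mul_nonneg (hw k (Finset.mem_Icc.1 hk).1)
    (Set.indicator_nonneg (fun _ _ => zero_le_one) k)

lemma sum_mul_indicator_one_le (hw : ∀ k, 1 ≤ k → 0 ≤ w k) (A : Set ℕ) (n : ℕ) :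
    ∑ k ∈ Finset.Icc 1 n, w k * A.indicator (fun _ => (1 : ℝ)) k ≤ ∑ k ∈ Finset.Icc 1 n, w k :=
  Finset.sum_le_sum fun k hk => mul_le_of_le_one_right (hw k (Finset.mem_Icc.1 hk).1)
    (Set.indicator_le_self' (fun _ _ => zero_le_one) k)

lemma sum_mul_indicator_one_isBigO (hw : ∀ k, 1 ≤ k → 0 ≤ w k) (A : Set ℕ) (l : Filter ℕ) :
    (fun n => ∑ k ∈ Finset.Icc 1 n, w k * A.indicator (fun _ => (1 : ℝ)) k) =O[l]
      fun n => ∑ k ∈ Finset.Icc 1 n, w k :=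
  .of_norm_le fun n => by
    rw [Real.norm_of_nonneg (sum_mul_indicator_one_nonneg hw A n)]
    exact sum_mul_indicator_one_le hw A n

end WeightedSums

section ConcaveSums

variable {ψ : ℝ → ℝ}

lemma sub_le_Spsi_of_concaveOn (hconc : ConcaveOn ℝ (Set.Ioi 0) ψ)
    (hdiff : ∀ x ∈ Set.Ioi (0 : ℝ), DifferentiableAt ℝ ψ x) (n : ℕ) :
    ψ (n + 1) - ψ 1 ≤ Spsi ψ n := by
  induction n with
  | zero => simp [Spsi]
  | succ n ih =>
    have hpos : (0 : ℝ) < n + 1 := n.cast_add_one_pos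
    have increment_le : ψ (n + 1 + 1) - ψ (n + 1) ≤ deriv ψ (n + 1) := by
      simpa [slope_def_field] using hconc.slope_le_deriv hpos
        (Set.mem_Ioi.2 (add_pos hpos one_pos)) (lt_add_one _) (hdiff _ hpos)
    unfold Spsi at ih ⊢
    rw [Finset.sum_Icc_succ_top (Nat.le_add_left 1 n)]
    push_cast
    linarith

lemma Spsi_le_of_concaveOn (hconc : ConcaveOn ℝ (Set.Ioi 0) ψ)
    (hdiff : ∀ x ∈ Set.Ioi (0 : ℝ), DifferentiableAt ℝ ψ x) (n : ℕ) :
    Spsi ψ (n + 1) ≤ ψ (n + 1) - ψ 1 + deriv ψ 1 := by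
  induction n with
  | zero => simp [Spsi]
  | succ n ih =>
    have hpos : (0 : ℝ) < n + 1 := n.cast_add_one_pos
    have hpos' : (0 : ℝ) < n + 1 + 1 := add_pos hpos one_pos
    have le_increment : deriv ψ (n + 1 + 1) ≤ ψ (n + 1 + 1) - ψ (n + 1) := by
      simpa [slope_def_field] using
        hconc.deriv_le_slope hpos hpos' (lt_add_one _) (hdiff _ hpos')
    unfold Spsi at ih ⊢
    rw [Finset.sum_Icc_succ_top (Nat.le_add_left 1 (n + 1))]
    push_cast
    linarith

end ConcaveSums

section MemD1

variable {ψ : ℝ → ℝ}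

lemma memD.tendsto_natCast_atTop (hψ : memD ψ) : Tendsto (fun n : ℕ => ψ n) atTop atTop :=
  hψ.2.2.2.comp tendsto_natCast_atTop_atTop

lemma memD1.deriv_pos (hψ : memD1 ψ) {x : ℝ} (hx : 0 < x) : 0 < deriv ψ x := by
  obtain ⟨⟨hmono, -, hdiff, -⟩, hconc⟩ := hψ
  have hx' : 0 < x + 1 := add_pos hx one_pos
  have slope_pos : 0 < slope ψ x (x + 1) := by
    simpa [slope_def_field] using hmono hx hx' (lt_add_one x)
  exact slope_pos.trans_le (hconc.slope_le_deriv hx hx' (lt_add_one x) (hdiff x hx))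

lemma memD1.deriv_natCast_pos (hψ : memD1 ψ) (n : ℕ) (hn : 1 ≤ n) : 0 < deriv ψ (n : ℝ) :=
  hψ.deriv_pos (Nat.cast_pos.2 hn)

lemma memD1.abs_Spsi_sub_le (hψ : memD1 ψ) {n : ℕ} (hn : 1 ≤ n) :
    |Spsi ψ n - ψ n| ≤ ψ 1 + deriv ψ 1 := by
  obtain ⟨m, rfl⟩ := Nat.exists_eq_add_of_le' hn
  have lower := sub_le_Spsi_of_concaveOn hψ.2 hψ.1.2.2.1 (m + 1)
  have upper := Spsi_le_of_concaveOn hψ.2 hψ.1.2.2.1 m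
  have hm : (0 : ℝ) < m + 1 := m.cast_add_one_pos
  have step : ψ (m + 1) < ψ (m + 1 + 1) := hψ.1.1 hm (add_pos hm one_pos) (lt_add_one _)
  have ψ_one_pos : 0 < ψ 1 := hψ.1.2.1 1 (Set.mem_Ioi.2 one_pos)
  have deriv_one_pos : 0 < deriv ψ 1 := hψ.deriv_pos one_pos
  push_cast at lower ⊢
  rw [abs_le]
  constructor <;> linarith

lemma memD1.Spsi_isEquivalent (hψ : memD1 ψ) : Spsi ψ ~[atTop] fun n : ℕ => ψ n := by
  have bounded : (Spsi ψ - fun n : ℕ => ψ n) =O[atTop] fun _ => (1 : ℝ) := by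
    refine .of_bound (ψ 1 + deriv ψ 1) ?_
    filter_upwards [eventually_ge_atTop 1] with n hn
    simpa using hψ.abs_Spsi_sub_le hn
  exact bounded.trans_isLittleO <| (Asymptotics.isLittleO_one_left_iff ℝ).2 <|
    tendsto_norm_atTop_atTop.comp hψ.1.tendsto_natCast_atTop

lemma memD1.tendsto_Spsi_atTop (hψ : memD1 ψ) : Tendsto (Spsi ψ) atTop atTop :=
  hψ.Spsi_isEquivalent.symm.tendsto_atTop hψ.1.tendsto_natCast_atTop

lemma memD1.liminf_Apsi_div_Spsi (hψ : memD1 ψ) (A : Set ℕ) :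
    liminf (fun n => Apsi ψ A n / Spsi ψ n) atTop =
      liminf (fun n : ℕ => Apsi ψ A n / ψ n) atTop := by
  have deriv_nonneg (n : ℕ) (hn : 1 ≤ n) : 0 ≤ deriv ψ (n : ℝ) := (hψ.deriv_natCast_pos n hn).le
  exact liminf_div_eq_of_isEquivalent
    (.of_forall (sum_mul_indicator_one_nonneg deriv_nonneg A))
    (hψ.tendsto_Spsi_atTop.eventually_gt_atTop 0)
    (hψ.1.tendsto_natCast_atTop.eventually_gt_atTop 0)
    hψ.Spsi_isEquivalent (sum_mul_indicator_one_isBigO deriv_nonneg A atTop)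

end MemD1

theorem stmt7_general (w : ℕ → ℝ) (hw : ∀ n : ℕ, 1 ≤ n → 0 < w n)
    (hdiv : Tendsto (fun n : ℕ => ∑ k ∈ Finset.Icc 1 n, w k) atTop atTop) (A : Set ℕ)
    (hdens : liminf (fun n : ℕ => (∑ k ∈ Finset.Icc 1 n, w k * A.indicator (fun _ => (1 : ℝ)) k) /
      ∑ k ∈ Finset.Icc 1 n, w k) atTop = 0) :
    ∃ c : ℕ → ℝ,
      (∀ n : ℕ, 1 ≤ n → 0 < c n) ∧
      ¬ Summable c ∧
      (∀ n : ℕ, 1 ≤ n → c (n + 1) / w (n + 1) ≤ c n / w n) ∧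
      Summable (fun n => A.indicator c n) := by
  have hw_nonneg (n : ℕ) (hn : 1 ≤ n) : 0 ≤ w n := (hw n hn).le
  have frequently_le := frequently_le_mul_of_liminf_div_eq_zero (hdiv.eventually_gt_atTop 0)
    (sum_mul_indicator_one_isBigO hw_nonneg A atTop) hdens
  simp only [← sum_range_add_one_eq_sum_Icc_one] at hdiv frequently_le
  obtain ⟨g, g_anti, g_pos, not_summable, summable⟩ :=
    exists_antitone_not_summable_mul_and_summable_mul
      (fun n => mul_nonneg (hw_nonneg (n + 1) n.succ_pos)
        (Set.indicator_nonneg (fun _ _ => zero_le_one) _))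
      (fun n => hw_nonneg (n + 1) n.succ_pos) hdiv frequently_le
  refine ⟨fun n => g (n - 1) * w n, fun n hn => mul_pos (g_pos _) (hw n hn), ?_, ?_, ?_⟩
  · rwa [← summable_nat_add_iff 1]
  · intro n hn
    simp only [mul_div_cancel_right₀ _ (hw n hn).ne', mul_div_cancel_right₀ _ (hw _ n.succ_pos).ne']
    exact g_anti (by omega)
  · rw [← summable_nat_add_iff 1]
    refine summable.congr fun n => ?_
    by_cases hn : n + 1 ∈ A <;> simp [hn]

/-- ψ ∈ 𝒟₁ and A infinite with d̲_ψ(A) = 0; then there is a positive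
sequence {c_n} with Σ c_n = ∞, c_n/ψ'(n) non-increasing, and Σ χ_A(n) c_n < ∞. -/
theorem stmt7 (ψ : ℝ → ℝ) (hψ : memD1 ψ) (A : Set ℕ) (hA : A.Infinite)
    (hdens : liminf (fun n : ℕ => Apsi ψ A n / ψ n) atTop = 0) :
    ∃ c : ℕ → ℝ,
      (∀ n : ℕ, 1 ≤ n → 0 < c n) ∧
      ¬ Summable c ∧
      (∀ n : ℕ, 1 ≤ n →
        c (n + 1) / deriv ψ ((n + 1 : ℕ) : ℝ) ≤ c n / deriv ψ (n : ℝ)) ∧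
      Summable (fun n => A.indicator c n) := by
  exact stmt7_general (fun n => deriv ψ n) hψ.deriv_natCast_pos hψ.tendsto_Spsi_atTop A
    ((hψ.liminf_Apsi_div_Spsi A).trans hdens)
end

section
/- Let ψ ∈ 𝒟 satisfy Σ_{k=1}^n ψ'(k) ~ ψ(n) as n → ∞, and let {c_n} be a positive real sequence such that {c_n/ψ'(n)} is non-increasing and tends to zero, and such that liminf_{n→∞} (ψ(n)/ψ'(n))·c_n > 0. Let {m_n} be a real sequence with m_n ∈ {−1, 0, 1}, and set A = {n ∈ ℕ : m_n = 1} and B = {n ∈ ℕ : m_n = −1}. If the sub-signed series Σ_{n=1}^∞ m_n·c_n converges, then lim_{n→∞} (A_ψ(n) − B_ψ(n))/ψ(n) = 0; in particular, the asymptotic ψ-density of A exists if and only if the asymptotic ψ-density of B exists, and in that case they are equal. -/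
open Filter

/-!
Put `u n = c n / ψ' n`. It decreases to `0`, and the lower bound on `ψ n * u n` keeps it nonzero, so
`1 / u n` increases to infinity and is `O(ψ n)`. Kronecker's lemma, applied to the convergent series
`∑ m n * c n` with the weights `1 / u n`, says that the sums of `m n * c n / u n = ψ' n * m n` up to
`n` are `o(1 / u n)`, hence `o(ψ n)`. These sums are `A_ψ(n) - B_ψ(n)`.
-/

section Kronecker

open Asymptotics Topology

theorem sum_range_succ_smul_by_parts_sub {R M : Type*} [Ring R] [AddCommGroup M] [Module R M]
    (b : ℕ → R) (x : ℕ → M) (L : M) (n : ℕ) :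
    ∑ k ∈ Finset.range (n + 1), b k • x k =
      b n • (∑ i ∈ Finset.range (n + 1), x i - L) + b 0 • L -
        ∑ k ∈ Finset.range n, (b (k + 1) - b k) • (∑ i ∈ Finset.range (k + 1), x i - L) := by
  rw [Finset.sum_range_by_parts, Nat.add_sub_cancel]
  have telescoped : ∑ k ∈ Finset.range n, (b (k + 1) - b k) • L = (b n - b 0) • L := by
    rw [← Finset.sum_smul, Finset.sum_range_sub]
  simp only [smul_sub _ _ L, Finset.sum_sub_distrib, telescoped]
  rw [sub_smul]
  abel

theorem isLittleO_const_of_tendsto_atTop {E α : Type*} [NormedAddCommGroup E] {l : Filter α}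
    {b : α → ℝ} (a : E) (hb : Tendsto b l atTop) : (fun _ => a) =o[l] b :=
  isLittleO_const_left.2 (Or.inr (tendsto_norm_atTop_atTop.comp hb))

variable {E : Type*} [NormedAddCommGroup E] [NormedSpace ℝ E] {b : ℕ → ℝ}

theorem isLittleO_smul_of_tendsto_zero {α : Type*} {l : Filter α} {t : α → E}
    (a : α → ℝ) (ht : Tendsto t l (𝓝 0)) : (fun n => a n • t n) =o[l] a := by
  simpa only [smul_eq_mul, mul_one] using
    (isBigO_refl a l).smul_isLittleO ((isLittleO_one_iff ℝ).2 ht)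

theorem isLittleO_sum_sub_smul_of_tendsto_zero {t : ℕ → E} (hmono : Monotone b)
    (hb : Tendsto b atTop atTop) (ht : Tendsto t atTop (𝓝 0)) :
    (fun n => ∑ k ∈ Finset.range n, (b (k + 1) - b k) • t k) =o[atTop] b := by
  have increments_nonneg : 0 ≤ fun k => b (k + 1) - b k :=
    fun k => sub_nonneg.2 (hmono k.le_succ)
  have increments_sum_tendsto :
      Tendsto (fun n => ∑ k ∈ Finset.range n, (b (k + 1) - b k)) atTop atTop := by
    simp only [Finset.sum_range_sub]
    exact tendsto_atTop_add_const_right _ (-b 0) hb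
  have telescoped : (fun n => ∑ k ∈ Finset.range n, (b (k + 1) - b k) • t k)
      =o[atTop] fun n => b n - b 0 := by
    simpa only [Finset.sum_range_sub] using
      (isLittleO_smul_of_tendsto_zero (fun k => b (k + 1) - b k) ht).sum_range
        increments_nonneg increments_sum_tendsto
  exact telescoped.trans_isBigO
    ((isBigO_refl b atTop).sub (isLittleO_const_of_tendsto_atTop (b 0) hb).isBigO)

theorem kronecker_isLittleO_sum_smul {x : ℕ → E} {L : E} (hmono : Monotone b)
    (hb : Tendsto b atTop atTop)
    (hx : Tendsto (fun n => ∑ k ∈ Finset.range n, x k) atTop (𝓝 L)) :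
    (fun n => ∑ k ∈ Finset.range (n + 1), b k • x k) =o[atTop] b := by
  have remainder_tendsto :
      Tendsto (fun n => ∑ k ∈ Finset.range (n + 1), x k - L) atTop (𝓝 0) :=
    tendsto_sub_nhds_zero_iff.2 ((tendsto_add_atTop_iff_nat 1).2 hx)
  simp only [sum_range_succ_smul_by_parts_sub b x L]
  exact ((isLittleO_smul_of_tendsto_zero b remainder_tendsto).add
    (isLittleO_const_of_tendsto_atTop _ hb)).sub
      (isLittleO_sum_sub_smul_of_tendsto_zero hmono hb remainder_tendsto)

end Kronecker

section WeightedSums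

open Asymptotics Topology

theorem pos_of_antitone_of_tendsto_zero {ι : Type*} [SemilatticeSup ι] {u : ι → ℝ}
    (hanti : Antitone u) (hzero : Tendsto u atTop (𝓝 0)) (hne : ∃ᶠ n in atTop, u n ≠ 0) (n : ι) :
    0 < u n := by
  have : Nonempty ι := ⟨n⟩
  obtain ⟨N, hnN, hN⟩ := frequently_atTop.1 hne n
  exact ((hanti.le_of_tendsto hzero N).lt_of_ne' hN).trans_le (hanti hnN)

theorem inv_isBigO_of_le_mul {α : Type*} {l : Filter α} {u f : α → ℝ} {δ : ℝ} (hδ : 0 < δ)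
    (h : ∀ᶠ n in l, δ ≤ f n * u n) : (fun n => (u n)⁻¹) =O[l] f := by
  refine IsBigO.of_bound δ⁻¹ (h.mono fun n hn => ?_)
  have norm_lower : δ ≤ ‖f n‖ * ‖u n‖ := hn.trans ((Real.le_norm_self _).trans_eq (norm_mul _ _))
  have norm_pos : 0 < ‖u n‖ :=
    pos_of_mul_pos_right (hδ.trans_le norm_lower) (norm_nonneg _)
  rw [norm_inv, inv_mul_eq_div, le_div_iff₀ hδ, inv_mul_le_iff₀ norm_pos, mul_comm]
  exact norm_lower

theorem isLittleO_sum_mul_of_antitone_div {w c f m : ℕ → ℝ} {δ L : ℝ}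
    (hanti : Antitone fun n => c n / w n) (hzero : Tendsto (fun n => c n / w n) atTop (𝓝 0))
    (hδ : 0 < δ) (hlower : ∀ᶠ n in atTop, δ ≤ f n * (c n / w n))
    (hconv : Tendsto (fun n => ∑ k ∈ Finset.range n, m k * c k) atTop (𝓝 L)) :
    (fun n => ∑ k ∈ Finset.range (n + 1), w k * m k) =o[atTop] f := by
  have ratio_pos : ∀ n, 0 < c n / w n :=
    pos_of_antitone_of_tendsto_zero hanti hzero
      (hlower.mono fun n hn => right_ne_zero_of_mul (hδ.trans_le hn).ne').frequently
  have inv_monotone : Monotone fun n => (c n / w n)⁻¹ :=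
    fun i j hij => inv_anti₀ (ratio_pos j) (hanti hij)
  have inv_tendsto : Tendsto (fun n => (c n / w n)⁻¹) atTop atTop :=
    (tendsto_nhdsWithin_iff.2 ⟨hzero, .of_forall ratio_pos⟩).inv_tendsto_nhdsGT_zero
  have term_eq : ∀ k, (c k / w k)⁻¹ • (m k * c k) = w k * m k := fun k => by
    obtain ⟨hc, hw⟩ := div_ne_zero_iff.1 (ratio_pos k).ne'
    rw [smul_eq_mul]
    field_simp
  simpa only [term_eq] using
    (kronecker_isLittleO_sum_smul inv_monotone inv_tendsto hconv).trans_isBigO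
      (inv_isBigO_of_le_mul hδ hlower)

end WeightedSums

theorem sum_Icc_one_eq_sum_range {M : Type*} [AddCommMonoid M] (f : ℕ → M) (n : ℕ) :
    ∑ k ∈ Finset.Icc 1 n, f k = ∑ k ∈ Finset.range n, f (k + 1) := by
  rw [Finset.range_eq_Ico, Finset.sum_Ico_add', zero_add, Finset.Ico_add_one_right_eq_Icc]

theorem Apsi_sub_Apsi_eq_sum (ψ : ℝ → ℝ) {m : ℕ → ℝ}
    (hm : ∀ n, m n = -1 ∨ m n = 0 ∨ m n = 1) (n : ℕ) :
    Apsi ψ {k | m k = 1} n - Apsi ψ {k | m k = -1} n =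
      ∑ k ∈ Finset.range n, deriv ψ ((k + 1 : ℕ) : ℝ) * m (k + 1) := by
  have indicator_sub : ∀ k, {k | m k = 1}.indicator (fun _ => (1 : ℝ)) k -
      {k | m k = -1}.indicator (fun _ => (1 : ℝ)) k = m k := fun k => by
    rcases hm k with h | h | h <;> norm_num [Set.indicator, h]
  simp only [Apsi, ← Finset.sum_sub_distrib, ← mul_sub, indicator_sub, sum_Icc_one_eq_sum_range]

theorem stmt17_general (ψ : ℝ → ℝ) (c : ℕ → ℝ)
    (hmono : ∀ n : ℕ, 1 ≤ n →
      c (n + 1) / deriv ψ ((n + 1 : ℕ) : ℝ) ≤ c n / deriv ψ (n : ℝ))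
    (hzero : Tendsto (fun n : ℕ => c n / deriv ψ (n : ℝ)) atTop (nhds 0))
    (hliminf : ∃ δ > (0:ℝ), ∀ᶠ n : ℕ in atTop, δ ≤ ψ n / deriv ψ n * c n)
    (m : ℕ → ℝ) (hm : ∀ n : ℕ, m n = -1 ∨ m n = 0 ∨ m n = 1)
    (hconv : ∃ L : ℝ,
      Tendsto (fun N : ℕ => ∑ n ∈ Finset.Icc 1 N, m n * c n) atTop (nhds L)) :
    Tendsto (fun n : ℕ =>
        (Apsi ψ {k | m k = 1} n - Apsi ψ {k | m k = -1} n) / ψ n) atTop (nhds 0) ∧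
    ∀ L : ℝ,
      Tendsto (fun n : ℕ => Apsi ψ {k | m k = 1} n / ψ n) atTop (nhds L) ↔
        Tendsto (fun n : ℕ => Apsi ψ {k | m k = -1} n / ψ n) atTop (nhds L) := by
  obtain ⟨δ, hδ, hlower⟩ := hliminf
  obtain ⟨S, hS⟩ := hconv
  have ratio_antitone : Antitone fun n : ℕ => c (n + 1) / deriv ψ ((n + 1 : ℕ) : ℝ) :=
    antitone_nat_of_succ_le fun n => hmono (n + 1) n.succ_pos
  have lower_bound : ∀ᶠ n : ℕ in atTop,
      δ ≤ ψ ((n + 1 : ℕ) : ℝ) * (c (n + 1) / deriv ψ ((n + 1 : ℕ) : ℝ)) :=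
    ((tendsto_add_atTop_nat 1).eventually hlower).mono fun n hn => hn.trans_eq (by ring)
  have difference_tendsto : Tendsto (fun n : ℕ =>
      (Apsi ψ {k | m k = 1} n - Apsi ψ {k | m k = -1} n) / ψ n) atTop (nhds 0) := by
    rw [← tendsto_add_atTop_iff_nat 1]
    simp only [Apsi_sub_Apsi_eq_sum ψ hm]
    exact (isLittleO_sum_mul_of_antitone_div ratio_antitone
      ((tendsto_add_atTop_iff_nat 1).2 hzero) hδ lower_bound
      (by simpa only [sum_Icc_one_eq_sum_range] using hS)).tendsto_div_nhds_zero
  refine ⟨difference_tendsto, fun L => tendsto_iff_of_dist ?_⟩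
  simpa only [Real.dist_eq, ← sub_div, abs_zero] using difference_tendsto.abs

/-- ψ ∈ 𝒟 with ∑_{k≤n} ψ'(k) ~ ψ(n), c positive with c_n/ψ'(n)
non-increasing → 0 and liminf (ψ(n)/ψ'(n))c_n > 0, m_n ∈ {−1,0,1},
A = {n : m_n = 1}, B = {n : m_n = −1}; if Σ m_n c_n converges then
(A_ψ(n) − B_ψ(n))/ψ(n) → 0, and d_ψ(A) exists iff d_ψ(B) exists, with equal values. -/
theorem stmt17 (ψ : ℝ → ℝ) (hψ : memD ψ)
    (hasym : Tendsto (fun n : ℕ => Spsi ψ n / ψ n) atTop (nhds 1))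
    (c : ℕ → ℝ) (hc_pos : ∀ n : ℕ, 1 ≤ n → 0 < c n)
    (hmono : ∀ n : ℕ, 1 ≤ n →
      c (n + 1) / deriv ψ ((n + 1 : ℕ) : ℝ) ≤ c n / deriv ψ (n : ℝ))
    (hzero : Tendsto (fun n : ℕ => c n / deriv ψ (n : ℝ)) atTop (nhds 0))
    (hliminf : ∃ δ > (0:ℝ), ∀ᶠ n : ℕ in atTop, δ ≤ ψ n / deriv ψ n * c n)
    (m : ℕ → ℝ) (hm : ∀ n : ℕ, m n = -1 ∨ m n = 0 ∨ m n = 1)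
    (hconv : ∃ L : ℝ,
      Tendsto (fun N : ℕ => ∑ n ∈ Finset.Icc 1 N, m n * c n) atTop (nhds L)) :
    Tendsto (fun n : ℕ =>
        (Apsi ψ {k | m k = 1} n - Apsi ψ {k | m k = -1} n) / ψ n) atTop (nhds 0) ∧
    ∀ L : ℝ,
      Tendsto (fun n : ℕ => Apsi ψ {k | m k = 1} n / ψ n) atTop (nhds L) ↔
        Tendsto (fun n : ℕ => Apsi ψ {k | m k = -1} n / ψ n) atTop (nhds L) := by
  exact stmt17_general ψ c hmono hzero hliminf m hm hconv
end
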